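/- Let Ψ be either the class of all forests or the class of all bipartite graphs, let α, β be reals with 2 < α ≤ 3 and 4α − β = 6, and let G be a minimal counterexample for Ψ, α, β. Then G has no vertex cut M such that the induced subgraph G[M] is isomorphic to the diamond graph D = K4 minus one edge. -/

import Mathlib

/-!
Write `M = {a, b, c, d}` for a diamond cut with `a`, `b` its nonadjacent vertices, and `L`, `R` for
the parts it separates. Since `4α - β = 6`, the diamond has quality `1`, so the qualities of the two
sides `G[M ∪ L]` and `G[M ∪ R]` add up to `q(G) + 1 > 1`.

If a side had quality greater than `1`, adding the edge `ab` to it would leave a smaller graph of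
positive quality, hence with a `Ψ`-cut. That cut has the clique `M` on one of its sides, so it is a
`Ψ`-cut of `G` as well, which is impossible. Both sides therefore have quality at most `1`, and so
both have positive quality and a `Ψ`-cut. These cuts must split `M`, which forces them to contain
`c` and `d` and to separate `a` from `b` (`side`). Their union then separates `a` from `b` in `G`
(`Splits.union`), and it induces two members of `Ψ` glued along the edge `cd`.

Both classes are closed under such gluing. For bipartite graphs one matches the colours along `cd`
(`bipartite_glue`). For forests one shows that every edge remains a bridge: deleting `cd` from the
forest on one side separates `c` from `d`, and collapsing the resulting components to `c` or `d`
retracts the glued graph onto the other side (`bridge_of_glue`). So `G` has a `Ψ`-cut, a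
contradiction.
-/

open SimpleGraph

/-- `M` is a vertex cut of `G`: the complement of `M` can be partitioned into two nonempty
sets `L`, `R` with no edge of `G` joining a vertex of `L` to a vertex of `R`. -/
def IsVertexCut {V : Type*} (G : SimpleGraph V) (M : Set V) : Prop :=
  ∃ L R : Set V, L.Nonempty ∧ R.Nonempty ∧ Disjoint L R ∧ L ∪ R = Mᶜ ∧
    ∀ x ∈ L, ∀ y ∈ R, ¬ G.Adj x y

/-- `(M, L, R)` is a separation of `G`. -/
def IsSeparation {V : Type*} (G : SimpleGraph V) (M L R : Set V) : Prop :=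
  L.Nonempty ∧ R.Nonempty ∧ M ∪ L ∪ R = Set.univ ∧
  Disjoint M L ∧ Disjoint M R ∧ Disjoint L R ∧
  ∀ x ∈ L, ∀ y ∈ R, ¬ G.Adj x y

/-- The quality function `q_{α,β}(G) = α|V(G)| − |E(G)| − β`. -/
noncomputable def quality {V : Type*} (α β : ℝ) (G : SimpleGraph V) : ℝ :=
  α * Nat.card V - Nat.card G.edgeSet - β

/-- degree of a vertex as the cardinality of its neighbor set. -/
noncomputable def vdeg {V : Type*} (G : SimpleGraph V) (v : V) : ℕ :=
  (G.neighborSet v).ncard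

/-- The class of forests. -/
def ForestClass : ∀ (W : Type), SimpleGraph W → Prop := fun _ H => H.IsAcyclic

/-- The class of bipartite graphs. -/
def BipartiteClass : ∀ (W : Type), SimpleGraph W → Prop := fun _ H => H.Colorable 2

/-- `G` has a `Ψ`-cut: a vertex cut whose induced subgraph lies in `Ψ`. -/
def HasPsiCut (Ψ : ∀ (W : Type), SimpleGraph W → Prop) {V : Type} (G : SimpleGraph V) : Prop :=
  ∃ M : Set V, IsVertexCut G M ∧ Ψ ↥M (G.induce M)

/-- `G` has a forest cut. -/
def HasForestCut {V : Type*} (G : SimpleGraph V) : Prop :=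
  ∃ M : Set V, IsVertexCut G M ∧ (G.induce M).IsAcyclic

/-- `G` has a bipartite cut. -/
def HasBipartiteCut {V : Type*} (G : SimpleGraph V) : Prop :=
  ∃ M : Set V, IsVertexCut G M ∧ (G.induce M).Colorable 2

/-- `G` has an independent cut. -/
def HasIndependentCut {V : Type*} (G : SimpleGraph V) : Prop :=
  ∃ M : Set V, IsVertexCut G M ∧ ∀ x ∈ M, ∀ y ∈ M, ¬ G.Adj x y

/-- `G` is a minimal counterexample for the class `Ψ` and parameters `α`, `β`. -/
def MinCounterexample (Ψ : ∀ (W : Type), SimpleGraph W → Prop) (α β : ℝ)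
    {V : Type} (G : SimpleGraph V) : Prop :=
  4 ≤ Nat.card V ∧ 0 < quality α β G ∧ ¬ HasPsiCut Ψ G ∧
  ∀ (W : Type) (H : SimpleGraph W),
    4 ≤ Nat.card W → Nat.card W < Nat.card V → 0 < quality α β H → HasPsiCut Ψ H

/-- `T0`: a triangle together with an isolated vertex. -/
def graphT0 : SimpleGraph (Fin 4) := SimpleGraph.fromEdgeSet {s(0,1), s(0,2), s(1,2)}

/-- `T1`: a triangle with an extra vertex joined to exactly one triangle vertex. -/
def graphT1 : SimpleGraph (Fin 4) := SimpleGraph.fromEdgeSet {s(0,1), s(0,2), s(1,2), s(2,3)}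

/-- The diamond graph `K4` minus one edge. -/
def diamondGraph : SimpleGraph (Fin 4) := (⊤ : SimpleGraph (Fin 4)).deleteEdges {s(0,1)}

/-- Number of edges of `G` with one endpoint in `X` and the other outside `X`. -/
noncomputable def crossEdges {V : Type*} (G : SimpleGraph V) (X : Set V) : ℕ :=
  {e : Sym2 V | e ∈ G.edgeSet ∧ ∃ x ∈ X, ∃ y ∉ X, e = s(x,y)}.ncard

/-! ### Separations inside a set of vertices -/

/-- `A` is the disjoint union of `S`, `P` and `Q`, with `P` and `Q` nonempty and no edge between
them: `S` separates `P` from `Q` inside the subgraph of `G` induced by `A`; all sets live in the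
ambient vertex type, so that cuts of different induced subgraphs can be combined. -/
structure Splits {V : Type*} (G : SimpleGraph V) (A S P Q : Set V) : Prop where
  left : P.Nonempty
  right : Q.Nonempty
  mem_iff : ∀ x, x ∈ A ↔ x ∈ S ∨ x ∈ P ∨ x ∈ Q
  not_left : ∀ x ∈ S, x ∉ P
  not_right : ∀ x ∈ S, x ∉ Q
  disj : ∀ x ∈ P, x ∉ Q
  no_edge : ∀ x ∈ P, ∀ y ∈ Q, ¬ G.Adj x y

theorem Splits.symm {V : Type*} {G : SimpleGraph V} {A S P Q : Set V} (h : Splits G A S P Q) :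
    Splits G A S Q P where
  left := h.right
  right := h.left
  mem_iff x := by rw [h.mem_iff x]; tauto
  not_left := h.not_right
  not_right := h.not_left
  disj x hx hx' := h.disj x hx' hx
  no_edge x hx y hy hxy := h.no_edge y hy x hx hxy.symm

theorem Splits.isVertexCut {V : Type*} {G : SimpleGraph V} {S P Q : Set V}
    (h : Splits G Set.univ S P Q) : IsVertexCut G S := by
  refine ⟨P, Q, h.left, h.right, Set.disjoint_left.2 h.disj, ?_, h.no_edge⟩
  ext x
  have h1 := h.mem_iff x
  have h2 := h.not_left x
  have h3 := h.not_right x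
  simp only [Set.mem_univ, Set.mem_union, Set.mem_compl_iff] at *
  tauto

theorem IsVertexCut.exists_splits {V : Type*} {G : SimpleGraph V} {S : Set V}
    (h : IsVertexCut G S) : ∃ P Q, Splits G Set.univ S P Q := by
  obtain ⟨P, Q, hP, hQ, hd, hu, he⟩ := h
  have hu' : ∀ x, (x ∈ P ∨ x ∈ Q) ↔ x ∉ S := fun x => by
    rw [← Set.mem_union, hu, Set.mem_compl_iff]
  refine ⟨P, Q, hP, hQ, ?_, ?_, ?_, fun x hx => Set.disjoint_left.1 hd hx, he⟩ <;>
    intro x <;> have := hu' x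
  · simp only [Set.mem_univ, true_iff]; tauto
  · tauto
  · tauto

/-- A cut of a side that leaves all of the middle part `M` on one side is a cut of the whole
graph: the far side `R` only sees `M`. -/
theorem Splits.extend {V : Type*} {G : SimpleGraph V} {M L R S P Q : Set V}
    (hM : Splits G Set.univ M L R) (hS : Splits G (M ∪ L) S P Q) (h : ∀ x ∈ M, x ∉ Q) :
    Splits G Set.univ S (P ∪ R) Q := by
  have hR : ∀ x ∈ R, x ∉ M ∪ L := fun x hx hx' =>
    hx'.elim (fun h => hM.not_right x h hx) (fun h => hM.disj x h hx)
  have hA : ∀ x, x ∈ M ∪ L ∨ x ∈ R := fun x => by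
    have := (hM.mem_iff x).1 trivial
    simp only [Set.mem_union]; tauto
  have hQL : ∀ x ∈ Q, x ∈ L := fun x hx =>
    ((hS.mem_iff x).2 (Or.inr (Or.inr hx))).resolve_left fun h' => h x h' hx
  refine ⟨hS.left.mono Set.subset_union_left, hS.right, ?_, ?_, hS.not_right, ?_, ?_⟩
  · intro x
    have := hA x
    have := hS.mem_iff x
    simp only [Set.mem_univ, Set.mem_union, true_iff] at *
    tauto
  · rintro x hx (hx' | hx')
    · exact hS.not_left x hx hx'
    · exact hR x hx' ((hS.mem_iff x).2 (Or.inl hx))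
  · rintro x (hx | hx) hx'
    · exact hS.disj x hx hx'
    · exact hM.disj x (hQL x hx') hx
  · rintro x (hx | hx) y hy hxy
    · exact hS.no_edge x hx y hy hxy
    · exact hM.no_edge y (hQL y hy) x hx hxy.symm

theorem Splits.mem_of_mem_of_mem {V : Type*} {G : SimpleGraph V} {A M L R : Set V}
    (hM : Splits G A M L R) {x : V} (h : x ∈ M ∪ L) (h' : x ∈ M ∪ R) : x ∈ M :=
  h.elim id fun hL => h'.elim id fun hR => (hM.disj x hL hR).elim

/-- Cuts of the two sides which agree on the middle part `M` combine to a cut of `G`. -/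
theorem Splits.union {V : Type*} {G : SimpleGraph V} {M L R S P Q S' P' Q' : Set V}
    (hM : Splits G Set.univ M L R) (hs : Splits G (M ∪ L) S P Q) (hs' : Splits G (M ∪ R) S' P' Q')
    (hS : ∀ x ∈ M, (x ∈ S ↔ x ∈ S') ∧ (x ∈ P ↔ x ∈ P') ∧ (x ∈ Q ↔ x ∈ Q')) :
    Splits G Set.univ (S ∪ S') (P ∪ P') (Q ∪ Q') := by
  have s1 : ∀ {x}, x ∈ S → x ∈ M ∪ L := fun h => (hs.mem_iff _).2 (Or.inl h)
  have p1 : ∀ {x}, x ∈ P → x ∈ M ∪ L := fun h => (hs.mem_iff _).2 (Or.inr (Or.inl h))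
  have q1 : ∀ {x}, x ∈ Q → x ∈ M ∪ L := fun h => (hs.mem_iff _).2 (Or.inr (Or.inr h))
  have s2 : ∀ {x}, x ∈ S' → x ∈ M ∪ R := fun h => (hs'.mem_iff _).2 (Or.inl h)
  have p2 : ∀ {x}, x ∈ P' → x ∈ M ∪ R := fun h => (hs'.mem_iff _).2 (Or.inr (Or.inl h))
  have q2 : ∀ {x}, x ∈ Q' → x ∈ M ∪ R := fun h => (hs'.mem_iff _).2 (Or.inr (Or.inr h))
  have hLR : ∀ {x}, x ∈ M ∪ L → x ∈ M ∪ R → x ∈ M := fun h k => hM.mem_of_mem_of_mem h k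
  -- an edge between the two sides has an endpoint in `M`
  have hno : ∀ {x y}, x ∈ M ∪ L → y ∈ M ∪ R → G.Adj x y → x ∈ M ∨ y ∈ M := by
    intro x y hx hy hxy
    by_contra! h
    exact hM.no_edge x (hx.resolve_left h.1) y (hy.resolve_left h.2) hxy
  refine ⟨hs.left.mono Set.subset_union_left, hs.right.mono Set.subset_union_left,
    ?_, ?_, ?_, ?_, ?_⟩
  · intro x
    have h1 := (hM.mem_iff x).1 trivial
    have h2 := hs.mem_iff x
    have h3 := hs'.mem_iff x
    clear hS hM hs hs'
    simp only [Set.mem_union, Set.mem_univ, true_iff] at *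
    tauto
  · rintro x (hx | hx) (hx' | hx')
    · exact hs.not_left x hx hx'
    · exact hs.not_left x hx ((hS x (hLR (s1 hx) (p2 hx'))).2.1.2 hx')
    · exact hs'.not_left x hx ((hS x (hLR (p1 hx') (s2 hx))).2.1.1 hx')
    · exact hs'.not_left x hx hx'
  · rintro x (hx | hx) (hx' | hx')
    · exact hs.not_right x hx hx'
    · exact hs.not_right x hx ((hS x (hLR (s1 hx) (q2 hx'))).2.2.2 hx')
    · exact hs'.not_right x hx ((hS x (hLR (q1 hx') (s2 hx))).2.2.1 hx')
    · exact hs'.not_right x hx hx'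
  · rintro x (hx | hx) (hx' | hx')
    · exact hs.disj x hx hx'
    · exact hs.disj x hx ((hS x (hLR (p1 hx) (q2 hx'))).2.2.2 hx')
    · exact hs'.disj x hx ((hS x (hLR (q1 hx') (p2 hx))).2.2.1 hx')
    · exact hs'.disj x hx hx'
  · rintro x (hx | hx) y (hy | hy) hxy
    · exact hs.no_edge x hx y hy hxy
    · rcases hno (p1 hx) (q2 hy) hxy with h | h
      · exact hs'.no_edge x ((hS x h).2.1.1 hx) y hy hxy
      · exact hs.no_edge x hx y ((hS y h).2.2.2 hy) hxy
    · rcases hno (q1 hy) (p2 hx) hxy.symm with h | h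
      · exact hs'.no_edge x hx y ((hS y h).2.2.1 hy) hxy
      · exact hs.no_edge x ((hS x h).2.1.2 hx) y hy hxy
    · exact hs'.no_edge x hx y hy hxy

/-! ### The two graph classes -/

/-- The class is closed under taking (not necessarily induced) subgraphs. -/
def SubgraphClosed (Ψ : ∀ (W : Type), SimpleGraph W → Prop) : Prop :=
  ∀ (W W' : Type) (H : SimpleGraph W) (H' : SimpleGraph W') (f : H →g H'),
    Function.Injective f → Ψ W' H' → Ψ W H

/-- The class is closed under gluing two graphs along the edge `cd`. -/
def EdgeGlueClosed (Ψ : ∀ (W : Type), SimpleGraph W → Prop) : Prop :=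
  ∀ (V : Type) (G : SimpleGraph V) (S T : Set V) (c d : V), G.Adj c d → c ∈ S → d ∈ S →
    c ∈ T → d ∈ T → (∀ x ∈ S, x ∈ T → x = c ∨ x = d) →
    (∀ x ∈ S, x ∉ T → ∀ y ∈ T, y ∉ S → ¬ G.Adj x y) →
    Ψ S (G.induce S) → Ψ T (G.induce T) → Ψ ↥(S ∪ T) (G.induce (S ∪ T))

theorem subgraphClosed_of {Ψ : ∀ (W : Type), SimpleGraph W → Prop}
    (hΨ : Ψ = ForestClass ∨ Ψ = BipartiteClass) : SubgraphClosed Ψ := by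
  intro W W' H H' f hf h
  rcases hΨ with rfl | rfl
  · exact IsAcyclic.comap f hf h
  · exact Colorable.of_hom f h

theorem bipartite_glue : EdgeGlueClosed BipartiteClass := by
  intro V G S T c d hcd hcS hdS hcT hdT hST hno ⟨C⟩ ⟨C'⟩
  classical
  -- permute the two colours on `T` so that both colourings agree at `c`, hence also at `d`
  let σ : Equiv.Perm (Fin 2) := Equiv.swap (C' ⟨c, hcT⟩) (C ⟨c, hcS⟩)
  have hc : σ (C' ⟨c, hcT⟩) = C ⟨c, hcS⟩ := Equiv.swap_apply_left _ _
  have hd : σ (C' ⟨d, hdT⟩) = C ⟨d, hdS⟩ := by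
    have h1 : C ⟨c, hcS⟩ ≠ C ⟨d, hdS⟩ := C.valid (by simpa using hcd)
    have h2 : σ (C' ⟨c, hcT⟩) ≠ σ (C' ⟨d, hdT⟩) :=
      fun h => C'.valid (v := ⟨c, hcT⟩) (w := ⟨d, hdT⟩) (by simpa using hcd) (σ.injective h)
    omega
  have hag : ∀ x (hS : x ∈ S) (hT : x ∈ T), σ (C' ⟨x, hT⟩) = C ⟨x, hS⟩ := by
    intro x hS hT
    rcases hST x hS hT with rfl | rfl
    · exact hc
    · exact hd
  let K : ↥(S ∪ T) → Fin 2 := fun x =>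
    if h : x.1 ∈ S then C ⟨x.1, h⟩ else σ (C' ⟨x.1, x.2.resolve_left h⟩)
  have KS : ∀ x (h : x.1 ∈ S), K x = C ⟨x.1, h⟩ := fun x h => dif_pos h
  have KT : ∀ x (h : x.1 ∈ T), K x = σ (C' ⟨x.1, h⟩) := fun x h => by
    by_cases hS : x.1 ∈ S
    · rw [KS x hS, hag]
    · exact dif_neg hS
  refine ⟨Coloring.mk K ?_⟩
  intro x y hxy
  have hxy' : G.Adj x.1 y.1 := hxy
  by_cases hS : x.1 ∈ S ∧ y.1 ∈ S
  · rw [KS x hS.1, KS y hS.2]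
    exact C.valid hxy'
  by_cases hT : x.1 ∈ T ∧ y.1 ∈ T
  · rw [KT x hT.1, KT y hT.2]
    exact fun h => C'.valid (v := ⟨x.1, hT.1⟩) (w := ⟨y.1, hT.2⟩) hxy' (σ.injective h)
  exfalso
  have hx := x.2
  have hy := y.2
  simp only [Set.mem_union] at hx hy
  have h1 := hno x.1
  have h2 := hno y.1
  by_cases hxS : x.1 ∈ S
  · exact h1 hxS (by tauto) y.1 (by tauto) (by tauto) hxy'
  · exact h2 (by tauto) (by tauto) x.1 (by tauto) hxS hxy'.symm

theorem Reachable.map_of_adj {V W : Type*} {H : SimpleGraph V} {H' : SimpleGraph W} (r : V → W)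
    (h : ∀ u v, H.Adj u v → H'.Reachable (r u) (r v)) {u v : V} (huv : H.Reachable u v) :
    H'.Reachable (r u) (r v) := by
  obtain ⟨p⟩ := huv
  induction p with
  | nil => rfl
  | cons h' _ ih => exact (h _ _ h').trans ih

/-- If `G[T]` is a forest meeting `S` only in the edge `cd`, then collapsing each component of
`G[T] - cd` to `c` or to `d` retracts `G[S ∪ T]` onto `G[S]`, so every edge of the
forest `G[S]`, being a bridge there, is still a bridge of `G[S ∪ T]`. The set `A = S ∪ T` is a
variable so that the lemma also applies with `S` and `T` exchanged. -/
theorem bridge_of_glue {V : Type} {G : SimpleGraph V} {S T : Set V} {c d : V} (hcd : G.Adj c d)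
    (hcS : c ∈ S) (hdS : d ∈ S) (hcT : c ∈ T) (hdT : d ∈ T)
    (hST : ∀ x ∈ S, x ∈ T → x = c ∨ x = d)
    (hno : ∀ x ∈ S, x ∉ T → ∀ y ∈ T, y ∉ S → ¬ G.Adj x y)
    (hS : (G.induce S).IsAcyclic) (hT : (G.induce T).IsAcyclic)
    {x y : V} (hx : x ∈ S) (hy : y ∈ S) (hxy : G.Adj x y) (A : Set V) (hA : A = S ∪ T)
    (hxA : x ∈ A) (hyA : y ∈ A) :
    (G.induce A).IsBridge s(⟨x, hxA⟩, ⟨y, hyA⟩) := by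
  classical
  rw [isBridge_iff]
  intro hreach
  have hbS := isAcyclic_iff_forall_adj_isBridge.1 hS (v := ⟨x, hx⟩) (w := ⟨y, hy⟩) hxy
  have hbT := isAcyclic_iff_forall_adj_isBridge.1 hT (v := ⟨c, hcT⟩) (w := ⟨d, hdT⟩) hcd
  rw [isBridge_iff] at hbS hbT
  apply hbS
  let F := (G.induce T).deleteEdges {s(⟨c, hcT⟩, ⟨d, hdT⟩)}
  let r : ↥A → ↥S := fun u => if h : u.1 ∈ S then ⟨u.1, h⟩ else
    if ∃ h : u.1 ∈ T, F.Reachable ⟨c, hcT⟩ ⟨u.1, h⟩ then ⟨c, hcS⟩ else ⟨d, hdS⟩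
  have rS : ∀ u (h : u.1 ∈ S), r u = ⟨u.1, h⟩ := fun u h => dif_pos h
  have rT : ∀ u (h : u.1 ∈ T),
      r u = if F.Reachable ⟨c, hcT⟩ ⟨u.1, h⟩ then ⟨c, hcS⟩ else ⟨d, hdS⟩ := by
    rintro ⟨u, hu⟩ h
    simp only at h
    by_cases hS : u ∈ S
    · rw [rS ⟨u, hu⟩ hS]
      rcases hST u hS h with rfl | rfl
      · rw [if_pos (Reachable.refl _)]
      · rw [if_neg hbT]
    · simp [r, hS, h]
  have key := Reachable.map_of_adj
    (H' := (G.induce S).deleteEdges {s(⟨x, hx⟩, ⟨y, hy⟩)}) r ?_ hreach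
  · rwa [rS _ hx, rS _ hy] at key
  intro u v huv
  obtain ⟨huv1, huv2⟩ := (deleteEdges_adj ..).1 huv
  have huv' : G.Adj u.1 v.1 := huv1
  by_cases h1 : u.1 ∈ S ∧ v.1 ∈ S
  · rw [rS u h1.1, rS v h1.2]
    apply Adj.reachable
    rw [deleteEdges_adj]
    refine ⟨huv', fun h => huv2 ?_⟩
    simp only [Set.mem_singleton_iff, Sym2.eq_iff, Subtype.ext_iff] at h ⊢
    exact h
  by_cases h2 : u.1 ∈ T ∧ v.1 ∈ T
  · have hF : F.Adj ⟨u.1, h2.1⟩ ⟨v.1, h2.2⟩ := by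
      rw [deleteEdges_adj]
      refine ⟨huv', fun h => h1 ?_⟩
      simp only [Set.mem_singleton_iff, Sym2.eq_iff, Subtype.ext_iff] at h
      rcases h with ⟨h, h'⟩ | ⟨h, h'⟩ <;> rw [h, h'] <;> exact ⟨by assumption, by assumption⟩
    have hiff : F.Reachable ⟨c, hcT⟩ ⟨u.1, h2.1⟩ ↔ F.Reachable ⟨c, hcT⟩ ⟨v.1, h2.2⟩ :=
      ⟨fun h => h.trans hF.reachable, fun h => h.trans hF.symm.reachable⟩
    rw [rT u h2.1, rT v h2.2]
    simp only [hiff]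
    rfl
  exfalso
  have hu : u.1 ∈ S ∨ u.1 ∈ T := by simpa [hA] using u.2
  have hv : v.1 ∈ S ∨ v.1 ∈ T := by simpa [hA] using v.2
  by_cases huS : u.1 ∈ S
  · exact hno u.1 huS (by tauto) v.1 (by tauto) (by tauto) huv'
  · exact hno v.1 (by tauto) (by tauto) u.1 (by tauto) huS huv'.symm

theorem forest_glue : EdgeGlueClosed ForestClass := by
  intro V G S T c d hcd hcS hdS hcT hdT hST hno hS hT
  refine isAcyclic_iff_forall_adj_isBridge.2 ?_
  rintro ⟨x, hx⟩ ⟨y, hy⟩ hxy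
  have hxy' : G.Adj x y := hxy
  by_cases h1 : x ∈ S ∧ y ∈ S
  · exact bridge_of_glue hcd hcS hdS hcT hdT hST hno hS hT h1.1 h1.2 hxy' _ rfl hx hy
  by_cases h2 : x ∈ T ∧ y ∈ T
  · exact bridge_of_glue hcd hcT hdT hcS hdS (fun x h h' => hST x h' h)
      (fun x h h' y k k' hxy => hno y k k' x h h' hxy.symm) hT hS h2.1 h2.2 hxy' _
      (Set.union_comm S T) hx hy
  exfalso
  simp only [Set.mem_union] at hx hy
  by_cases hxS : x ∈ S
  · exact hno x hxS (by tauto) y (by tauto) (by tauto) hxy'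
  · exact hno y (by tauto) (by tauto) x (by tauto) hxS hxy'.symm

theorem edgeGlueClosed_of {Ψ : ∀ (W : Type), SimpleGraph W → Prop}
    (hΨ : Ψ = ForestClass ∨ Ψ = BipartiteClass) : EdgeGlueClosed Ψ := by
  rcases hΨ with rfl | rfl
  · exact forest_glue
  · exact bipartite_glue

/-! ### Cuts of induced subgraphs -/

/-- A `Ψ`-cut of `G'[A]` gives a `Ψ`-cut of `G[A]` for every subgraph `G` of `G'`, described by
subsets of the ambient vertex type. -/
theorem HasPsiCut.exists_splits {Ψ : ∀ (W : Type), SimpleGraph W → Prop}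
    (hm : SubgraphClosed Ψ) {V : Type} {G G' : SimpleGraph V} (hle : G ≤ G') {A : Set V}
    (h : HasPsiCut Ψ (G'.induce A)) :
    ∃ S P Q, Splits G A S P Q ∧ Splits G' A S P Q ∧ Ψ S (G.induce S) := by
  obtain ⟨S, hcut, hΨ⟩ := h
  obtain ⟨P, Q, hs⟩ := hcut.exists_splits
  have hmem : ∀ (B : Set A) (x : V) (hx : x ∈ A), x ∈ Subtype.val '' B ↔ ⟨x, hx⟩ ∈ B := by
    intro B x hx
    simp [hx]
  have hsub : ∀ (B : Set A) (x : V), x ∈ Subtype.val '' B → x ∈ A := by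
    rintro B x ⟨y, -, rfl⟩
    exact y.2
  have key : Splits G' A (Subtype.val '' S) (Subtype.val '' P) (Subtype.val '' Q) := by
    refine ⟨hs.left.image _, hs.right.image _, ?_, ?_, ?_, ?_, ?_⟩
    · intro x
      constructor
      · intro hx
        rw [hmem _ x hx, hmem _ x hx, hmem _ x hx]
        exact (hs.mem_iff _).1 trivial
      · rintro (h | h | h) <;> exact hsub _ _ h
    · rintro _ ⟨x, hx, rfl⟩
      rw [hmem _ _ x.2]
      exact hs.not_left x hx
    · rintro _ ⟨x, hx, rfl⟩
      rw [hmem _ _ x.2]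
      exact hs.not_right x hx
    · rintro _ ⟨x, hx, rfl⟩
      rw [hmem _ _ x.2]
      exact hs.disj x hx
    · rintro _ ⟨x, hx, rfl⟩ _ ⟨y, hy, rfl⟩
      exact hs.no_edge x hx y hy
  refine ⟨_, _, _, { key with no_edge := fun x hx y hy h => key.no_edge x hx y hy (hle h) }, key,
    hm _ _ _ _ ⟨fun x => ⟨⟨x.1, hsub _ _ x.2⟩, (hmem _ _ _).1 x.2⟩, ?_⟩ ?_ hΨ⟩
  · intro u v huv
    exact hle huv
  · intro u v huv
    exact Subtype.ext (congrArg (fun z : S => z.1.1) huv)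

/-! ### Counting edges -/

theorem card_edgeSet_induce {V : Type*} (G : SimpleGraph V) (A : Set V) :
    Nat.card (G.induce A).edgeSet = {e ∈ G.edgeSet | ∀ x ∈ e, x ∈ A}.ncard := by
  rw [Nat.card_coe_set_eq, ← Set.ncard_image_of_injective _
    (Sym2.map.injective (Subtype.val_injective (p := (· ∈ A))))]
  congr 1
  ext e
  induction e with | _ x y
  constructor
  · rintro ⟨e', he', h⟩
    induction e' with | _ u v
    rw [← h]
    simpa using he'
  · rintro ⟨h, h'⟩
    exact ⟨s(⟨x, h' x (by simp)⟩, ⟨y, h' y (by simp)⟩), h, rfl⟩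

theorem card_edgeSet_add {V : Type*} [Finite V] {G : SimpleGraph V} {M L R : Set V}
    (hM : Splits G Set.univ M L R) :
    Nat.card (G.induce (M ∪ L)).edgeSet + Nat.card (G.induce (M ∪ R)).edgeSet =
      Nat.card G.edgeSet + Nat.card (G.induce M).edgeSet := by
  rw [card_edgeSet_induce, card_edgeSet_induce, card_edgeSet_induce, Nat.card_coe_set_eq,
    ← Set.ncard_union_add_ncard_inter]
  congr 2
  · ext e
    induction e with | _ x y
    have hx := hM.mem_iff x
    have hy := hM.mem_iff y
    have h1 := hM.no_edge x
    have h2 := hM.no_edge y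
    simp only [Set.mem_union, Set.mem_ofPred_eq, Sym2.mem_iff, forall_eq_or_imp, forall_eq,
      mem_edgeSet, Set.mem_univ, true_iff] at *
    have h3 := G.adj_comm x y
    grind
  · ext e
    induction e with | _ x y
    have hx := hM.disj x
    have hy := hM.disj y
    simp only [Set.mem_union, Set.mem_inter_iff, Set.mem_ofPred_eq, Sym2.mem_iff, forall_eq_or_imp,
      forall_eq, mem_edgeSet] at *
    tauto

theorem card_add {V : Type*} [Finite V] {G : SimpleGraph V} {M L R : Set V}
    (hM : Splits G Set.univ M L R) :
    Nat.card ↥(M ∪ L) + Nat.card ↥(M ∪ R) = Nat.card V + Nat.card M := by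
  simp only [Nat.card_coe_set_eq]
  rw [← Set.ncard_union_add_ncard_inter, ← Set.ncard_univ]
  congr 2
  · ext x
    have hx := hM.mem_iff x
    simp only [Set.mem_union, Set.mem_univ, true_iff] at *
    tauto
  · ext x
    have hx := hM.disj x
    simp only [Set.mem_union, Set.mem_inter_iff] at *
    tauto

theorem card_edgeSet_sup_edge {V : Type*} [Finite V] (G : SimpleGraph V) (a b : V) (A : Set V) :
    Nat.card ((G ⊔ edge a b).induce A).edgeSet ≤ Nat.card (G.induce A).edgeSet + 1 := by
  rw [card_edgeSet_induce, card_edgeSet_induce]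
  refine (Set.ncard_le_ncard (t := insert s(a, b) _) ?_ (Set.toFinite _)).trans
    (Set.ncard_insert_le s(a, b) _)
  intro e
  induction e with | _ x y
  simp only [Set.mem_insert_iff, Set.mem_ofPred_eq, mem_edgeSet, sup_adj, edge_adj, Sym2.eq_iff]
  tauto

/-! ### The two sides of a diamond cut -/

/-- One side of a diamond cut in a minimal counterexample. Adding the edge `ab` turns
`M` into a clique, which no cut can split; so the side has quality at most `1`. If its quality is
positive, it has a `Ψ`-cut, which must contain `c` and `d` and separate `a` from `b`. -/
theorem side {Ψ : ∀ (W : Type), SimpleGraph W → Prop} (hm : SubgraphClosed Ψ)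
    {α β : ℝ} {V : Type} [Finite V] {G : SimpleGraph V} (hG : MinCounterexample Ψ α β G)
    {M L R : Set V} (hM : Splits G Set.univ M L R) {a b c d : V}
    (hMe : M = {a, b, c, d}) (hM4 : Nat.card M = 4)
    (hac : G.Adj a c) (had : G.Adj a d) (hbc : G.Adj b c) (hbd : G.Adj b d) (hcd : G.Adj c d) :
    quality α β (G.induce (M ∪ L)) ≤ 1 ∧ (0 < quality α β (G.induce (M ∪ L)) →
      ∃ S P Q, Splits G (M ∪ L) S P Q ∧ Ψ S (G.induce S) ∧ a ∈ P ∧ b ∈ Q ∧ c ∈ S ∧ d ∈ S) := by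
  obtain ⟨-, -, hnc, hmin⟩ := hG
  have h4 : 4 ≤ Nat.card ↥(M ∪ L) := by
    rw [← hM4, Nat.card_coe_set_eq, Nat.card_coe_set_eq]
    exact Set.ncard_le_ncard Set.subset_union_left (Set.toFinite _)
  have hlt : Nat.card ↥(M ∪ L) < Nat.card V := by
    rw [Nat.card_coe_set_eq, ← Set.ncard_univ]
    obtain ⟨z, hz⟩ := hM.right
    refine Set.ncard_lt_ncard ((Set.ssubset_univ_iff).2 fun h => ?_) (Set.toFinite _)
    have hz' : z ∈ M ∪ L := h ▸ Set.mem_univ z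
    exact hz'.elim (fun h => hM.not_right z h hz) (fun h => hM.disj z h hz)
  -- every `Ψ`-cut of a side has vertices of `M` on both of its sides
  have hP : ∀ S P Q, Splits G (M ∪ L) S P Q → Ψ S (G.induce S) → ∃ x ∈ M, x ∈ P := by
    intro S P Q h hΨ
    by_contra! hcon
    exact hnc ⟨S, (hM.extend h.symm hcon).isVertexCut, hΨ⟩
  have hA : ∀ x ∈ M, x ∈ M ∪ L := fun x hx => Or.inl hx
  constructor
  · by_contra! hq
    have hpos : 0 < quality α β ((G ⊔ edge a b).induce (M ∪ L)) := by
      have := card_edgeSet_sup_edge G a b (M ∪ L)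
      have h' : (Nat.card ((G ⊔ edge a b).induce (M ∪ L)).edgeSet : ℝ) ≤
        Nat.card (G.induce (M ∪ L)).edgeSet + 1 := by exact_mod_cast this
      unfold quality at hq ⊢
      linarith
    obtain ⟨S, P, Q, hs, hs', hΨ⟩ :=
      (hmin _ _ h4 hlt hpos).exists_splits hm (le_sup_left : G ≤ G ⊔ edge a b)
    obtain ⟨x, hxM, hxP⟩ := hP S P Q hs hΨ
    obtain ⟨y, hyM, hyQ⟩ := hP S Q P hs.symm hΨ
    have hxy : x ≠ y := fun h => hs.disj x hxP (h ▸ hyQ)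
    apply hs'.no_edge x hxP y hyQ
    have h1 := hac.symm
    have h2 := had.symm
    have h3 := hbc.symm
    have h4 := hbd.symm
    have h5 := hcd.symm
    rw [sup_adj, edge_adj]
    rw [hMe] at hxM hyM
    simp only [Set.mem_insert_iff, Set.mem_singleton_iff] at hxM hyM
    rcases hxM with rfl | rfl | rfl | rfl <;> rcases hyM with rfl | rfl | rfl | rfl <;>
      simp_all
  · intro hpos
    obtain ⟨S, P, Q, hs, -, hΨ⟩ := (hmin _ _ h4 hlt hpos).exists_splits hm (le_refl G)
    have haM : a ∈ M := by simp [hMe]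
    have hbM : b ∈ M := by simp [hMe]
    have hcM : c ∈ M := by simp [hMe]
    have hdM : d ∈ M := by simp [hMe]
    have fin : ∀ P Q, Splits G (M ∪ L) S P Q → a ∈ P → b ∈ Q →
        ∃ S P Q, Splits G (M ∪ L) S P Q ∧ Ψ S (G.induce S) ∧ a ∈ P ∧ b ∈ Q ∧ c ∈ S ∧ d ∈ S := by
      intro P Q hs ha hb
      refine ⟨S, P, Q, hs, hΨ, ha, hb, ?_, ?_⟩
      · rcases (hs.mem_iff c).1 (hA c hcM) with h | h | h
        · exact h
        · exact (hs.no_edge c h b hb hbc.symm).elim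
        · exact (hs.no_edge a ha c h hac).elim
      · rcases (hs.mem_iff d).1 (hA d hdM) with h | h | h
        · exact h
        · exact (hs.no_edge d h b hb hbd.symm).elim
        · exact (hs.no_edge a ha d h had).elim
    obtain ⟨x, hxM, hxP⟩ := hP S P Q hs hΨ
    obtain ⟨y, hyM, hyQ⟩ := hP S Q P hs.symm hΨ
    have hxy : x ≠ y := fun h => hs.disj x hxP (h ▸ hyQ)
    have hnadj := hs.no_edge x hxP y hyQ
    have h1 := hac.symm
    have h2 := had.symm
    have h3 := hbc.symm
    have h4 := hbd.symm
    have h5 := hcd.symm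
    rw [hMe] at hxM hyM
    simp only [Set.mem_insert_iff, Set.mem_singleton_iff] at hxM hyM
    have hcase : (x = a ∧ y = b) ∨ (x = b ∧ y = a) := by
      rcases hxM with rfl | rfl | rfl | rfl <;> rcases hyM with rfl | rfl | rfl | rfl <;>
        first
        | exact (hxy rfl).elim
        | exact Or.inl ⟨rfl, rfl⟩
        | exact Or.inr ⟨rfl, rfl⟩
        | exact (hnadj (by assumption)).elim
    rcases hcase with ⟨rfl, rfl⟩ | ⟨rfl, rfl⟩
    · exact fin P Q hs hxP hyQ
    · exact fin Q P hs.symm hyQ hxP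

theorem card_edgeSet_diamond : Nat.card diamondGraph.edgeSet = 5 := by
  have h : diamondGraph.edgeSet =
      (({s(0,2), s(0,3), s(1,2), s(1,3), s(2,3)} : Finset (Sym2 (Fin 4))) : Set _) := by
    ext e
    induction e with | _ x y
    simp only [diamondGraph, mem_edgeSet, deleteEdges_adj, top_adj, Set.mem_singleton_iff,
      Finset.mem_coe]
    revert x y
    decide
  rw [h, Nat.card_coe_set_eq, Set.ncard_coe_finset]
  decide

/-- a minimal counterexample has no cut inducing the diamond graph. -/
theorem stmt8 (Ψ : ∀ (W : Type), SimpleGraph W → Prop)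
    (hΨ : Ψ = ForestClass ∨ Ψ = BipartiteClass)
    (α β : ℝ) (hα1 : 2 < α) (hα2 : α ≤ 3) (hβ : 4 * α - β = 6)
    {V : Type} [Fintype V] (G : SimpleGraph V) (hG : MinCounterexample Ψ α β G) :
    ¬ ∃ M : Set V, IsVertexCut G M ∧ Nonempty ((G.induce M) ≃g diamondGraph) := by
  rintro ⟨M, hcut, ⟨φ⟩⟩
  obtain ⟨L, R, hM⟩ := hcut.exists_splits
  have hm := subgraphClosed_of hΨ
  let w : Fin 4 → V := fun i => (φ.symm i).1
  have hw : ∀ i j, diamondGraph.Adj i j → G.Adj (w i) (w j) := fun i j hij =>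
    φ.symm.map_rel_iff.2 hij
  have hac : G.Adj (w 0) (w 2) := hw _ _ (by simp [diamondGraph])
  have had : G.Adj (w 0) (w 3) := hw _ _ (by simp [diamondGraph])
  have hbc : G.Adj (w 1) (w 2) := hw _ _ (by simp [diamondGraph])
  have hbd : G.Adj (w 1) (w 3) := hw _ _ (by simp [diamondGraph])
  have hcd : G.Adj (w 2) (w 3) := hw _ _ (by simp [diamondGraph])
  have hMe : M = {w 0, w 1, w 2, w 3} := by
    ext x
    simp only [Set.mem_insert_iff, Set.mem_singleton_iff]
    constructor
    · intro hx
      have h : w (φ ⟨x, hx⟩) = x := by simp [w]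
      generalize φ ⟨x, hx⟩ = i at h
      subst h
      fin_cases i <;> simp
    · rintro (rfl | rfl | rfl | rfl) <;> exact (φ.symm _).2
  have hM4 : Nat.card M = 4 := by rw [Nat.card_congr φ.toEquiv]; simp
  have hM5 : Nat.card (G.induce M).edgeSet = 5 := by
    rw [Nat.card_congr φ.mapEdgeSet, card_edgeSet_diamond]
  generalize w 0 = a at *
  generalize w 1 = b at *
  generalize w 2 = c at *
  generalize w 3 = d at *
  have hM' : Splits G Set.univ M R L := hM.symm
  obtain ⟨hL1, hL⟩ := side hm hG hM hMe hM4 hac had hbc hbd hcd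
  obtain ⟨hR1, hR⟩ := side hm hG hM' hMe hM4 hac had hbc hbd hcd
  -- the diamond has quality `4 * α - 5 - β = 1`
  have hsum : quality α β (G.induce (M ∪ L)) + quality α β (G.induce (M ∪ R)) =
      quality α β G + 1 := by
    have h1 : (Nat.card (G.induce (M ∪ L)).edgeSet : ℝ) + Nat.card (G.induce (M ∪ R)).edgeSet =
        Nat.card G.edgeSet + 5 := by
      have := card_edgeSet_add hM
      rw [hM5] at this
      exact_mod_cast this
    have h2 : (Nat.card ↥(M ∪ L) : ℝ) + Nat.card ↥(M ∪ R) = Nat.card V + 4 := by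
      have := card_add hM
      rw [hM4] at this
      exact_mod_cast this
    unfold quality
    linear_combination α * h2 - h1 + hβ
  have hq := hG.2.1
  obtain ⟨S, P, Q, hs, hΨS, ha, hb, hc, hd⟩ := hL (by linarith)
  obtain ⟨S', P', Q', hs', hΨS', ha', hb', hc', hd'⟩ := hR (by linarith)
  have hMx : ∀ x, x ∈ M → x = a ∨ x = b ∨ x = c ∨ x = d := fun x hx => by simpa [hMe] using hx
  -- on `M` the two cuts agree: `a` is on the left, `b` on the right, `c` and `d` in the cut
  have hS : ∀ x ∈ M, (x ∈ S ↔ x ∈ S') ∧ (x ∈ P ↔ x ∈ P') ∧ (x ∈ Q ↔ x ∈ Q') := by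
    intro x hx
    have h1 := hs.not_left x
    have h2 := hs.not_right x
    have h3 := hs.disj x
    have h4 := hs'.not_left x
    have h5 := hs'.not_right x
    have h6 := hs'.disj x
    rcases hMx x hx with rfl | rfl | rfl | rfl
    · exact ⟨iff_of_false (fun h => h1 h ha) (fun h => h4 h ha'), iff_of_true ha ha',
        iff_of_false (h3 ha) (h6 ha')⟩
    · exact ⟨iff_of_false (fun h => h2 h hb) (fun h => h5 h hb'),
        iff_of_false (fun h => h3 h hb) (fun h => h6 h hb'), iff_of_true hb hb'⟩
    · exact ⟨iff_of_true hc hc', iff_of_false (h1 hc) (h4 hc'), iff_of_false (h2 hc) (h5 hc')⟩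
    · exact ⟨iff_of_true hd hd', iff_of_false (h1 hd) (h4 hd'), iff_of_false (h2 hd) (h5 hd')⟩
  have hSA : ∀ x ∈ S, x ∈ M ∪ L := fun x h => (hs.mem_iff x).2 (Or.inl h)
  have hSA' : ∀ x ∈ S', x ∈ M ∪ R := fun x h => (hs'.mem_iff x).2 (Or.inl h)
  have hcut := hM.union hs hs' hS
  refine hG.2.2.1 ⟨S ∪ S', hcut.isVertexCut,
    edgeGlueClosed_of hΨ V G S S' c d hcd hc hd hc' hd' ?_ ?_ hΨS hΨS'⟩
  · intro x hx hx'
    rcases hMx x (hM.mem_of_mem_of_mem (hSA x hx) (hSA' x hx')) with rfl | rfl | h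
    · exact (hs.not_left _ hx ha).elim
    · exact (hs.not_right _ hx hb).elim
    · exact h
  · intro x hx hx' y hy hy'
    exact hM.no_edge x ((hSA x hx).resolve_left fun h => hx' ((hS x h).1.1 hx)) y
      ((hSA' y hy).resolve_left fun h => hy' ((hS y h).1.2 hy))
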